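/- There are exactly 6 conjugacy classes of finite-index subgroups Γ̄ of PSL(2,ℤ) that have genus zero and satisfy n + 3·e₂(Γ̄) + 2·e₃(Γ̄) = 6, where n is the index of Γ̄. Moreover, among these 6 classes exactly 2 are torsion-free and exactly 4 contain a nontrivial element of finite order. -/

import Mathlib

open Matrix

/-- `SL(2,ℤ)`: the group of 2×2 integer matrices of determinant 1. -/
abbrev SL2Z := Matrix.SpecialLinearGroup (Fin 2) ℤ

instance : Fact (Even (Fintype.card (Fin 2))) := ⟨by simp⟩

/-- The subgroup `{±I}` of `SL(2,ℤ)`. -/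
def pmOne : Subgroup SL2Z := Subgroup.zpowers (-1 : SL2Z)

instance : pmOne.Normal := by
  constructor
  intro x hx g
  obtain ⟨n, rfl⟩ := hx
  have h : Commute ((-1 : SL2Z) ^ n) g := (Commute.neg_one_left g).zpow_left n
  refine ⟨n, ?_⟩
  rw [← h.eq, mul_assoc, mul_inv_cancel, mul_one]

/-- `PSL(2,ℤ)`, the modular group, as the quotient of `SL(2,ℤ)` by `{±I}`. -/
abbrev PSL2Z := SL2Z ⧸ pmOne

/-- The natural projection `ξ : SL(2,ℤ) → PSL(2,ℤ)`. -/
def xi : SL2Z →* PSL2Z := QuotientGroup.mk' pmOne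

/-- The element `S` of `PSL(2,ℤ)`, the image of `[[0,-1],[1,0]]`. -/
def Sp : PSL2Z := xi ⟨!![0, -1; 1, 0], by norm_num [Matrix.det_fin_two_of]⟩

/-- The element `T` of `PSL(2,ℤ)`, the image of `[[1,1],[0,1]]`. -/
def Tp : PSL2Z := xi ⟨!![1, 1; 0, 1], by norm_num [Matrix.det_fin_two_of]⟩

/-- The number of left cosets in `PSL(2,ℤ)/Γ` fixed by `g` (for the
left-multiplication action).  For `g = S` this is `e₂(Γ)`, for `g = S*T` it is `e₃(Γ)`. -/
noncomputable def nFix (g : PSL2Z) (Γ : Subgroup PSL2Z) : ℕ :=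
  Nat.card {x : PSL2Z ⧸ Γ // g • x = x}

/-- The number of orbits of the cyclic subgroup generated by `g` on `PSL(2,ℤ)/Γ`.
For `g = S, S*T, T` these are `c₂(Γ), c₃(Γ), h(Γ)` respectively. -/
noncomputable def nOrb (g : PSL2Z) (Γ : Subgroup PSL2Z) : ℕ :=
  Nat.card (MulAction.orbitRel.Quotient (Subgroup.zpowers g) (PSL2Z ⧸ Γ))

/-- `Γ` has genus zero: `c₂(Γ) + c₃(Γ) + h(Γ) = index(Γ) + 2`. -/
def GenusZero (Γ : Subgroup PSL2Z) : Prop :=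
  nOrb Sp Γ + nOrb (Sp * Tp) Γ + nOrb Tp Γ = Γ.index + 2

/-- `Γ` is torsion free: it contains no nontrivial element of finite order. -/
def TorsionFree (Γ : Subgroup PSL2Z) : Prop :=
  ∀ x ∈ Γ, x ≠ 1 → ¬ IsOfFinOrder x

/-- Two subgroups of a group are conjugate. -/
def SubgroupConj {G : Type*} [Group G] (H K : Subgroup G) : Prop :=
  ∃ g : G, Subgroup.map (MulAut.conj g).toMonoidHom H = K

/-- The number of conjugacy classes of subgroups of `PSL(2,ℤ)` satisfying `P`. -/
noncomputable def countClasses (P : Subgroup PSL2Z → Prop) : ℕ :=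
  Nat.card (Quot fun A B : {Γ : Subgroup PSL2Z // P Γ} => SubgroupConj A.1 B.1)

/-- The index of the torsion free subgroup `Γ^tf` associated to `Γ`:
`index(Γ) + 3·e₂(Γ) + 2·e₃(Γ)`. -/
noncomputable def tfIdx (Γ : Subgroup PSL2Z) : ℕ :=
  Γ.index + 3 * nFix Sp Γ + 2 * nFix (Sp * Tp) Γ

/-!
A finite-index subgroup `Γ` is determined up to conjugacy by its coset diagram: the transitive
pair of permutations, of orders dividing `2` and `3`, by which `S` and `ST` act on the cosets.
Every such pair occurs, because `PSL(2,ℤ)` is the free product of `⟨S⟩` and `⟨ST⟩`. Both this and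
the fact that elements of finite order are conjugate to powers of `S` or `ST` come from one
observation: up to conjugacy, an element of a group generated by `s` and `r` with `s² = r³ = 1` is
a power of `s`, a power of `r`, or a nonempty product of factors `s r` and `s r⁻¹`. In `PSL(2,ℤ)`
these factors are the images of the nonnegative matrices `[[1,1],[0,1]]` and `[[1,0],[1,1]]`, and
nonempty products of such matrices never have finite order.

Now `n + 3e₂ + 2e₃ = 6` leaves the triples `(n, e₂, e₃) = (1,1,1), (2,0,2), (3,1,0), (4,0,1),
(6,0,0)`. Each of the first four has exactly one transitive diagram. The last has three, one of
which, that of the commutator subgroup, has genus one.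
-/

open Equiv

local notation "Rp" => Sp * Tp

section AlternatingWord

variable {G H : Type*} [Group G] [Group H] {s r : G}

lemma submonoidClosure_pair_eq_top (hs : s ^ 2 = 1) (hr : r ^ 3 = 1)
    (hsr : Subgroup.closure {s, r} = ⊤) : Submonoid.closure {s, r} = ⊤ := by
  have hfin : ∀ x ∈ ({s, r} : Set G), IsOfFinOrder x := by
    rintro x (rfl | rfl)
    exacts [isOfFinOrder_iff_pow_eq_one.2 ⟨2, two_pos, hs⟩,
      isOfFinOrder_iff_pow_eq_one.2 ⟨3, three_pos, hr⟩]
  rw [← Subgroup.closure_toSubmonoid_of_isOfFinOrder hfin, hsr, Subgroup.top_toSubmonoid]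

lemma zpow_eq_one_or_exists_units (hr : r ^ 3 = 1) (i : ℤ) :
    r ^ i = 1 ∨ ∃ ε : ℤˣ, r ^ i = r ^ (ε : ℤ) := by
  have hmod (k : ℤ) : r ^ k = r ^ (k % 3) := zpow_eq_zpow_emod' k hr
  obtain h | h | h : i % 3 = 0 ∨ i % 3 = 1 ∨ i % 3 = 2 := by omega
  · exact .inl <| by rw [hmod, h, zpow_zero]
  · exact .inr ⟨1, by rw [hmod, h, Units.val_one]⟩
  · exact .inr ⟨-1, by rw [hmod, h, hmod (-1 : ℤˣ)]; rfl⟩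

/-- The product `s r^ε₁ s r^ε₂ ⋯ s r^εₖ`. When `s` and `r` have orders `2` and `3`, these are the
words in the free product of `⟨s⟩` and `⟨r⟩` that start in one factor and end in the other. -/
def alternatingWord (s r : G) (l : List ℤˣ) : G :=
  (l.map fun ε : ℤˣ => s * r ^ (ε : ℤ)).prod

@[simp]
lemma alternatingWord_nil : alternatingWord s r [] = 1 := rfl

@[simp]
lemma alternatingWord_cons (ε : ℤˣ) (l : List ℤˣ) :
    alternatingWord s r (ε :: l) = s * r ^ (ε : ℤ) * alternatingWord s r l := by
  simp [alternatingWord]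

lemma alternatingWord_concat (l : List ℤˣ) (ε : ℤˣ) :
    alternatingWord s r (l ++ [ε]) = alternatingWord s r l * (s * r ^ (ε : ℤ)) := by
  simp [alternatingWord]

lemma map_alternatingWord (f : G →* H) (l : List ℤˣ) :
    f (alternatingWord s r l) = alternatingWord (f s) (f r) l := by
  simp [alternatingWord, map_list_prod, Function.comp_def]

lemma mul_alternatingWord_cons (hs : s ^ 2 = 1) (ε : ℤˣ) (l : List ℤˣ) :
    s * alternatingWord s r (ε :: l) = r ^ (ε : ℤ) * alternatingWord s r l := by
  rw [alternatingWord_cons, ← mul_assoc, ← mul_assoc, ← pow_two, hs, one_mul]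

lemma exists_eq_zpow_mul_alternatingWord_mul_zpow (hs : s ^ 2 = 1) (hr : r ^ 3 = 1)
    (hsr : Subgroup.closure {s, r} = ⊤) (g : G) :
    ∃ (i : ℤ) (l : List ℤˣ) (j : ℤ), g = r ^ i * alternatingWord s r l * s ^ j := by
  have hgen := submonoidClosure_pair_eq_top hs hr hsr
  induction g using Submonoid.induction_of_closure_eq_top_left hgen with
  | one => exact ⟨0, [], 0, by simp⟩
  | mul_left x hx g ih =>
    obtain ⟨i, l, j, rfl⟩ := ih
    rcases hx with rfl | rfl
    · obtain hi | ⟨ε, hi⟩ := zpow_eq_one_or_exists_units hr i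
      · cases l with
        | nil => exact ⟨0, [], j + 1, by simp [hi, mul_self_zpow]⟩
        | cons δ l =>
          exact ⟨δ, l, j, by rw [hi, one_mul, ← mul_assoc, mul_alternatingWord_cons hs]⟩
      · exact ⟨0, ε :: l, j, by simp [hi, mul_assoc]⟩
    · exact ⟨i + 1, l, j, by simp only [← mul_self_zpow, mul_assoc]⟩

/-- The conjugates of elements of the two factors `⟨s⟩` and `⟨r⟩` and of cyclically reduced words of
positive length. If `s` and `r` have orders `2` and `3`, every element of the group generated by
them is of this form. -/
def IsConjToReduced (s r g : G) : Prop :=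
  (∃ j : ℤ, IsConj g (s ^ j)) ∨ (∃ i : ℤ, IsConj g (r ^ i)) ∨
    ∃ l ≠ [], IsConj g (alternatingWord s r l)

lemma IsConjToReduced.of_isConj {g h : G} (hgh : IsConj g h) (hh : IsConjToReduced s r h) :
    IsConjToReduced s r g := by
  obtain ⟨j, hj⟩ | ⟨i, hi⟩ | ⟨l, hl, hl'⟩ := hh
  exacts [.inl ⟨j, hgh.trans hj⟩, .inr (.inl ⟨i, hgh.trans hi⟩), .inr (.inr ⟨l, hl, hgh.trans hl'⟩)]

lemma isConj_mul_comm (g h : G) : IsConj (g * h) (h * g) :=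
  isConj_iff.2 ⟨h, by group⟩

lemma isConjToReduced_zpow_mul_alternatingWord (hs : s ^ 2 = 1) (hr : r ^ 3 = 1) (i : ℤ)
    (l : List ℤˣ) :
    IsConjToReduced s r (r ^ i * alternatingWord s r l) ∧
      IsConjToReduced s r (s * (r ^ i * alternatingWord s r l)) := by
  induction hn : l.length using Nat.strong_induction_on generalizing l i with
  | _ n ih => ?_
  subst hn
  constructor
  · rcases l.eq_nil_or_concat' with rfl | ⟨l, δ, rfl⟩
    · exact .inr (.inl ⟨i, by rw [alternatingWord_nil, mul_one]⟩)
    -- Cyclic permutation merges the last power of `r` with the first one.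
    have hconj : IsConj (r ^ i * alternatingWord s r (l ++ [δ]))
        (s * (r ^ ((δ : ℤ) + i) * alternatingWord s r l)) := by
      rw [alternatingWord_concat, ← mul_assoc, _root_.zpow_add]
      simpa only [mul_assoc] using
        isConj_mul_comm (r ^ i * alternatingWord s r l) (s * r ^ (δ : ℤ))
    exact .of_isConj hconj (ih l.length (by simp) _ l rfl).2
  · obtain hi | ⟨ε, hi⟩ := zpow_eq_one_or_exists_units hr i
    · rw [hi, one_mul]
      cases l with
      | nil => exact .inl ⟨1, by rw [alternatingWord_nil, mul_one, zpow_one]⟩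
      | cons ε l =>
        rw [mul_alternatingWord_cons hs]
        exact (ih l.length (by simp) ε l rfl).1
    · rw [hi, ← mul_assoc, ← alternatingWord_cons]
      exact .inr (.inr ⟨ε :: l, by simp, .refl _⟩)

theorem isConjToReduced (hs : s ^ 2 = 1) (hr : r ^ 3 = 1) (hsr : Subgroup.closure {s, r} = ⊤)
    (g : G) : IsConjToReduced s r g := by
  obtain ⟨i, l, j, rfl⟩ := exists_eq_zpow_mul_alternatingWord_mul_zpow hs hr hsr g
  refine .of_isConj (isConj_mul_comm _ _) ?_
  rw [zpow_eq_zpow_emod' j hs]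
  obtain hj | hj := Int.emod_two_eq_zero_or_one j
  · simpa [hj] using (isConjToReduced_zpow_mul_alternatingWord hs hr i l).1
  · simpa [hj] using (isConjToReduced_zpow_mul_alternatingWord hs hr i l).2

end AlternatingWord

section ModularGroup

lemma xi_eq_one_iff {A : SL2Z} : xi A = 1 ↔ A = 1 ∨ A = -1 := by
  rw [xi, QuotientGroup.mk'_apply, QuotientGroup.eq_one_iff, pmOne, Subgroup.mem_zpowers_iff]
  constructor
  · rintro ⟨k, rfl⟩
    exact (Int.even_or_odd k).imp Even.neg_one_zpow Odd.neg_one_zpow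
  · rintro (rfl | rfl)
    exacts [⟨0, zpow_zero _⟩, ⟨1, zpow_one _⟩]

lemma Sp_eq_xi : Sp = xi ModularGroup.S := rfl

lemma Tp_eq_xi : Tp = xi ModularGroup.T := rfl

lemma Sp_sq : Sp ^ 2 = 1 := by
  rw [Sp_eq_xi, ← map_pow, xi_eq_one_iff]
  decide

lemma Sp_mul_Tp_cube : Rp ^ 3 = 1 := by
  rw [Sp_eq_xi, Tp_eq_xi, ← map_mul, ← map_pow, xi_eq_one_iff]
  decide

lemma Sp_ne_one : Sp ≠ 1 := by
  rw [Sp_eq_xi, Ne, xi_eq_one_iff]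
  decide

lemma Sp_mul_Tp_ne_one : Rp ≠ 1 := by
  rw [Sp_eq_xi, Tp_eq_xi, ← map_mul, Ne, xi_eq_one_iff]
  decide

lemma Sp_mul_Sp_mul_Tp : Sp * Rp = Tp := by
  rw [← mul_assoc, ← pow_two, Sp_sq, one_mul]

lemma closure_Sp_Sp_mul_Tp : Subgroup.closure {Sp, Rp} = ⊤ := by
  have hS : Sp ∈ Subgroup.closure {Sp, Rp} := Subgroup.subset_closure (.inl rfl)
  have hR : Rp ∈ Subgroup.closure {Sp, Rp} := Subgroup.subset_closure (.inr rfl)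
  have hT : Tp ∈ Subgroup.closure {Sp, Rp} := by
    simpa only [Sp_mul_Sp_mul_Tp] using mul_mem hS hR
  rw [eq_top_iff, ← MonoidHom.range_eq_top.2 (QuotientGroup.mk'_surjective pmOne),
    MonoidHom.range_eq_map, ← SpecialLinearGroup.SL2Z_generators, MonoidHom.map_closure,
    Subgroup.closure_le, Set.image_pair]
  exact Set.pair_subset hS hT

lemma one_le_apply_self {A : SL2Z} (hA : ∀ i j, 0 ≤ A i j) : 1 ≤ A 0 0 ∧ 1 ≤ A 1 1 := by
  have hdet := A.det_coe
  rw [det_fin_two] at hdet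
  constructor <;> nlinarith [hA 0 0, hA 0 1, hA 1 0, hA 1 1]

/-- The matrices in `SL(2,ℤ)` with nonnegative entries other than the identity. -/
def positiveMatrices : Subsemigroup SL2Z where
  carrier := {A : SL2Z | (∀ i j, 0 ≤ A i j) ∧ 0 < A 0 1 + A 1 0}
  mul_mem' := by
    intro A B ⟨hA, hA'⟩ ⟨hB, hB'⟩
    obtain ⟨hA00, hA11⟩ := one_le_apply_self hA
    obtain ⟨hB00, hB11⟩ := one_le_apply_self hB
    have hAB (i j : Fin 2) : (A * B) i j = A i 0 * B 0 j + A i 1 * B 1 j :=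
      (mul_apply ..).trans (Fin.sum_univ_two _)
    refine ⟨fun i j => ?_, ?_⟩
    · rw [hAB]
      exact add_nonneg (mul_nonneg (hA i 0) (hB 0 j)) (mul_nonneg (hA i 1) (hB 1 j))
    · rw [hAB, hAB]
      nlinarith [hA 0 1, hA 1 0, hB 0 1, hB 1 0]

lemma not_isOfFinOrder_xi {A : SL2Z} (hA : A ∈ positiveMatrices) : ¬ IsOfFinOrder (xi A) := by
  have hpow (n : ℕ) : A ^ (n + 1) ∈ positiveMatrices := by
    induction n with
    | zero => simpa using hA
    | succ n ih => exact pow_succ A (n + 1) ▸ mul_mem ih hA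
  rw [isOfFinOrder_iff_pow_eq_one]
  rintro ⟨n, hn, hAn⟩
  obtain ⟨n, rfl⟩ := Nat.exists_eq_add_one.2 hn
  have hpos := (hpow n).2
  rw [← map_pow, xi_eq_one_iff] at hAn
  rcases hAn with h | h <;> simp [h] at hpos

lemma exists_positiveMatrices_xi_eq (ε : ℤˣ) :
    ∃ A ∈ positiveMatrices, xi A = Sp * Rp ^ (ε : ℤ) := by
  obtain rfl | rfl := Int.units_eq_one_or ε
  · refine ⟨ModularGroup.T, ⟨fun i j => by fin_cases i <;> fin_cases j <;> decide, by decide⟩, ?_⟩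
    rw [Units.val_one, zpow_one, Sp_mul_Sp_mul_Tp, Tp_eq_xi]
  · refine ⟨ModularGroup.S * ModularGroup.T⁻¹ * ModularGroup.S⁻¹,
      ⟨fun i j => by fin_cases i <;> fin_cases j <;> decide, by decide⟩, ?_⟩
    simp [Sp_eq_xi, Tp_eq_xi, mul_assoc]

lemma not_isOfFinOrder_alternatingWord {l : List ℤˣ} (hl : l ≠ []) :
    ¬ IsOfFinOrder (alternatingWord Sp Rp l) := by
  suffices h : ∃ A ∈ positiveMatrices, xi A = alternatingWord Sp Rp l by
    obtain ⟨A, hA, hAl⟩ := h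
    exact hAl ▸ not_isOfFinOrder_xi hA
  induction l with
  | nil => contradiction
  | cons ε l ih =>
    obtain ⟨A, hA, hAε⟩ := exists_positiveMatrices_xi_eq ε
    rcases eq_or_ne l [] with rfl | hl
    · exact ⟨A, hA, by simp [hAε]⟩
    · obtain ⟨B, hB, hBl⟩ := ih hl
      exact ⟨A * B, mul_mem hA hB, by rw [map_mul, hAε, hBl, alternatingWord_cons]⟩

theorem eq_one_or_isConj_of_isOfFinOrder {g : PSL2Z} (hg : IsOfFinOrder g) :
    g = 1 ∨ IsConj g Sp ∨ IsConj g Rp ∨ IsConj g Rp⁻¹ := by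
  obtain ⟨j, h⟩ | ⟨i, h⟩ | ⟨l, hl, h⟩ :=
    isConjToReduced Sp_sq Sp_mul_Tp_cube closure_Sp_Sp_mul_Tp g
  · rw [zpow_eq_zpow_emod' j Sp_sq] at h
    obtain hj | hj := Int.emod_two_eq_zero_or_one j
    · exact .inl (by simpa [hj] using h)
    · exact .inr (.inl (by simpa [hj] using h))
  · obtain hi | ⟨ε, hi⟩ := zpow_eq_one_or_exists_units Sp_mul_Tp_cube i
    · exact .inl (isConj_one_left.1 (hi ▸ h))
    · rw [hi] at h
      obtain rfl | rfl := Int.units_eq_one_or ε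
      · exact .inr (.inr (.inl (by simpa using h)))
      · exact .inr (.inr (.inr (by simpa using h)))
  · exact absurd (h.isOfFinOrder hg) (not_isOfFinOrder_alternatingWord hl)

section Presentation

variable {G : Type*} [Group G] {s r : G}

lemma injective_of_map_eq_Sp (hs : s ^ 2 = 1) (hr : r ^ 3 = 1)
    (hsr : Subgroup.closure {s, r} = ⊤) {f : G →* PSL2Z} (hfs : f s = Sp) (hfr : f r = Rp) :
    Function.Injective f := by
  refine (injective_iff_map_eq_one f).2 fun g hg => ?_
  have hconj {x : G} (hx : IsConj g x) : f x = 1 := by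
    simpa [hg, eq_comm] using f.map_isConj hx
  suffices h : IsConj g 1 by simpa using h
  obtain ⟨j, h⟩ | ⟨i, h⟩ | ⟨l, hl, h⟩ := isConjToReduced hs hr hsr g
  · have hj := hconj h
    rw [map_zpow, hfs, ← orderOf_dvd_iff_zpow_eq_one, orderOf_eq_prime Sp_sq Sp_ne_one] at hj
    obtain ⟨k, rfl⟩ := hj
    simpa [_root_.zpow_mul, ← zpow_natCast, hs] using h
  · have hi := hconj h
    rw [map_zpow, hfr, ← orderOf_dvd_iff_zpow_eq_one,
      orderOf_eq_prime Sp_mul_Tp_cube Sp_mul_Tp_ne_one] at hi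
    obtain ⟨k, rfl⟩ := hi
    simpa [_root_.zpow_mul, hr] using h
  · have hl' := hconj h
    rw [map_alternatingWord, hfs, hfr] at hl'
    exact absurd (hl' ▸ .one) (not_isOfFinOrder_alternatingWord hl)

/-- The relations `s² = 1`, `r³ = 1` between the generators `s = of 0` and `r = of 1`. -/
def orderTwoThreeRels : Set (FreeGroup (Fin 2)) :=
  {FreeGroup.of 0 ^ 2, FreeGroup.of 1 ^ 3}

lemma lift_eq_one_of_mem_orderTwoThreeRels (hs : s ^ 2 = 1) (hr : r ^ 3 = 1) :
    ∀ w ∈ orderTwoThreeRels, FreeGroup.lift ![s, r] w = 1 := by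
  rintro w (rfl | rfl) <;> simpa

theorem exists_monoidHom_map_Sp_eq (hs : s ^ 2 = 1) (hr : r ^ 3 = 1) :
    ∃ φ : PSL2Z →* G, φ Sp = s ∧ φ Rp = r := by
  let f := PresentedGroup.toGroup (lift_eq_one_of_mem_orderTwoThreeRels Sp_sq Sp_mul_Tp_cube)
  have hf (i : Fin 2) : f (.of i) = ![Sp, Rp] i := PresentedGroup.toGroup.of _
  have hinj : Function.Injective f := by
    refine injective_of_map_eq_Sp (s := .of 0) (r := .of 1) ?_ ?_ ?_ (hf 0) (hf 1)
    · exact PresentedGroup.one_of_mem (.inl rfl)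
    · exact PresentedGroup.one_of_mem (.inr rfl)
    · rw [← PresentedGroup.closure_range_of]
      congr 1
      ext x
      simp [Fin.exists_fin_two, eq_comm]
  have hsurj : Function.Surjective f := by
    rw [← MonoidHom.range_eq_top, eq_top_iff, ← closure_Sp_Sp_mul_Tp, Subgroup.closure_le]
    exact Set.pair_subset ⟨_, hf 0⟩ ⟨_, hf 1⟩
  let e := MulEquiv.ofBijective f ⟨hinj, hsurj⟩
  let F := PresentedGroup.toGroup (lift_eq_one_of_mem_orderTwoThreeRels hs hr)
  have he (i : Fin 2) : e.symm (![Sp, Rp] i) = .of i := e.symm_apply_eq.2 (hf i).symm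
  have hFe (i : Fin 2) : F (e.symm (![Sp, Rp] i)) = ![s, r] i := by
    rw [he]
    exact PresentedGroup.toGroup.of _
  exact ⟨F.comp e.symm.toMonoidHom, hFe 0, hFe 1⟩

end Presentation

end ModularGroup

section CosetSpace

open MulAction

section Group

variable {G X : Type*} [Group G] [MulAction G X] {H K : Subgroup G}

lemma exists_equiv_of_stabilizer_eq [IsPretransitive G X] {x : X} (hx : stabilizer G x = H) :
    ∃ e : G ⧸ H ≃ X, ∀ (g : G) (y), e (g • y) = g • e y := by
  subst hx
  refine ⟨.ofBijective (ofQuotientStabilizer G x) ⟨injective_ofQuotientStabilizer G x, fun y => ?_⟩,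
    ofQuotientStabilizer_smul G x⟩
  obtain ⟨g, rfl⟩ := exists_smul_eq G x y
  exact ⟨g, ofQuotientStabilizer_mk G x g⟩

lemma stabilizer_coe_quotient (H : Subgroup G) (g : G) :
    stabilizer G (g : G ⧸ H) = H.map (MulAut.conj g).toMonoidHom := by
  have hg : (g : G ⧸ H) = g • ((1 : G) : G ⧸ H) := by
    rw [Quotient.smul_coe, smul_eq_mul, mul_one]
  rw [hg, stabilizer_smul_eq_stabilizer_map_conj, stabilizer_quotient]

theorem subgroupConj_iff_exists_equiv :
    SubgroupConj H K ↔ ∃ e : G ⧸ K ≃ G ⧸ H, ∀ (g : G) (x), e (g • x) = g • e x := by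
  constructor
  · rintro ⟨g, hg⟩
    exact exists_equiv_of_stabilizer_eq ((stabilizer_coe_quotient H g).trans hg)
  · rintro ⟨e, he⟩
    obtain ⟨g, hg⟩ := QuotientGroup.mk_surjective (e (1 : G))
    refine ⟨g, ?_⟩
    rw [← stabilizer_coe_quotient, hg]
    refine .trans ?_ (stabilizer_quotient K)
    ext k
    rw [mem_stabilizer_iff, mem_stabilizer_iff, ← he, e.apply_eq_iff_eq]

lemma exists_mem_isConj_iff {g : G} : (∃ x ∈ H, IsConj x g) ↔ ∃ q : G ⧸ H, g • q = q := by
  simp_rw [← mem_stabilizer_iff, QuotientGroup.mk_surjective.exists, stabilizer_coe_quotient,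
    isConj_iff, Subgroup.mem_map]
  exact ⟨fun ⟨x, hx, c, hc⟩ => ⟨c, x, hx, hc⟩, fun ⟨c, x, hx, hc⟩ => ⟨x, hx, c, hc⟩⟩

end Group

variable {Γ : Subgroup PSL2Z}

lemma map_smul_of_map_Sp_smul {X Y : Type*} [MulAction PSL2Z X] [MulAction PSL2Z Y] {F : X → Y}
    (hS : ∀ x, F (Sp • x) = Sp • F x) (hR : ∀ x, F (Rp • x) = Rp • F x)
    (g : PSL2Z) (x : X) : F (g • x) = g • F x := by
  have hgen := submonoidClosure_pair_eq_top Sp_sq Sp_mul_Tp_cube closure_Sp_Sp_mul_Tp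
  induction g using Submonoid.induction_of_closure_eq_top_left hgen generalizing x with
  | one => rw [one_smul, one_smul]
  | mul_left h hh g ih =>
    rcases hh with rfl | rfl
    · rw [mul_smul, mul_smul, hS, ih]
    · rw [mul_smul _ g, mul_smul _ g, hR, ih]

lemma eq_univ_of_forall_smul_mem {X : Type*} [MulAction PSL2Z X] [IsPretransitive PSL2Z X]
    {A : Set X} (hA : A.Nonempty) (hS : ∀ x ∈ A, Sp • x ∈ A)
    (hR : ∀ x ∈ A, Rp • x ∈ A) : A = Set.univ := by
  have hgen := submonoidClosure_pair_eq_top Sp_sq Sp_mul_Tp_cube closure_Sp_Sp_mul_Tp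
  obtain ⟨x, hx⟩ := hA
  have horbit (g : PSL2Z) : g • x ∈ A := by
    induction g using Submonoid.induction_of_closure_eq_top_left hgen with
    | one => rwa [one_smul]
    | mul_left h hh g ih =>
      rw [mul_smul]
      rcases hh with rfl | rfl
      exacts [hS _ ih, hR _ ih]
  refine Set.eq_univ_of_forall fun y => ?_
  obtain ⟨g, rfl⟩ := exists_smul_eq PSL2Z x y
  exact horbit g

lemma smul_ne_of_torsionFree (hΓ : TorsionFree Γ) {g : PSL2Z} (hg : g ≠ 1)
    (hfin : IsOfFinOrder g) (q : PSL2Z ⧸ Γ) : g • q ≠ q := by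
  intro hq
  obtain ⟨x, hx, hxg⟩ := exists_mem_isConj_iff.2 ⟨q, hq⟩
  refine hΓ x hx ?_ (hxg.symm.isOfFinOrder hfin)
  rintro rfl
  exact hg (isConj_one_right.1 hxg)

theorem torsionFree_iff_forall_smul_ne :
    TorsionFree Γ ↔
      (∀ q : PSL2Z ⧸ Γ, Sp • q ≠ q) ∧ ∀ q : PSL2Z ⧸ Γ, Rp • q ≠ q := by
  constructor
  · exact fun hΓ => ⟨smul_ne_of_torsionFree hΓ Sp_ne_one
      (isOfFinOrder_iff_pow_eq_one.2 ⟨2, two_pos, Sp_sq⟩),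
      smul_ne_of_torsionFree hΓ Sp_mul_Tp_ne_one
      (isOfFinOrder_iff_pow_eq_one.2 ⟨3, three_pos, Sp_mul_Tp_cube⟩)⟩
  · rintro ⟨hS, hR⟩ x hx hx1 hfin
    have hfix {g : PSL2Z} (hxg : IsConj x g) : ∃ q : PSL2Z ⧸ Γ, g • q = q :=
      exists_mem_isConj_iff.1 ⟨x, hx, hxg⟩
    obtain h | h | h | h := eq_one_or_isConj_of_isOfFinOrder hfin
    · exact hx1 h
    · exact (hfix h).elim hS
    · exact (hfix h).elim hR
    · obtain ⟨q, hq⟩ := hfix h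
      exact hR q (inv_smul_eq_iff.1 hq).symm

variable {ι : Type*} [Fintype ι] [DecidableEq ι] (e : PSL2Z ⧸ Γ ≃ ι) {g : PSL2Z} {p : Perm ι}

lemma nFix_eq_card (h : ∀ x, e (g • x) = p (e x)) :
    nFix g Γ = Fintype.card {i // p i = i} := by
  rw [nFix, ← Nat.card_eq_fintype_card]
  exact Nat.card_congr (e.subtypeEquiv fun x => by rw [← h, e.apply_eq_iff_eq])

instance : DecidableRel (Perm.SameCycle.setoid p).r := inferInstanceAs (DecidableRel p.SameCycle)

lemma nOrb_eq_card (h : ∀ x, e (g • x) = p (e x)) :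
    nOrb g Γ = Fintype.card (Quotient (Perm.SameCycle.setoid p)) := by
  rw [nOrb, ← Nat.card_eq_fintype_card]
  have hp : e.permCongrHom (toPermHom PSL2Z _ g) = p := by
    ext i
    simp [h]
  have hpow (k : ℤ) (x : PSL2Z ⧸ Γ) : (p ^ k) (e x) = e (g ^ k • x) := by
    rw [← hp, ← map_zpow, ← map_zpow]
    simp
  refine Nat.card_congr (Quotient.congr e fun x y => ?_)
  change x ∈ orbit (Subgroup.zpowers g) y ↔ ∃ k : ℤ, (p ^ k) (e x) = e y
  rw [mem_orbit_symm, mem_orbit_iff]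
  simp only [hpow, e.apply_eq_iff_eq, Subgroup.exists_zpowers]
  exact Iff.rfl

end CosetSpace

/-- The coset diagram of a finite-index subgroup of `PSL(2,ℤ)`, in the abstract: a transitive pair
of permutations of `Fin degree` of orders dividing `2` and `3`, thought of as the actions of `Sp`
and `Rp` on the cosets. Transitivity is spelled out through invariant sets, so that it is decided
by evaluation for a concrete diagram. -/
structure CosetDiagram where
  degree : ℕ
  s : Perm (Fin degree)
  r : Perm (Fin degree)
  degree_ne_zero : degree ≠ 0 := by decide
  s_sq : s ^ 2 = 1 := by decide
  r_cube : r ^ 3 = 1 := by decide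
  eq_univ_of_invariant : ∀ A : Finset (Fin degree), A.Nonempty → (∀ i ∈ A, s i ∈ A) →
    (∀ i ∈ A, r i ∈ A) → A = Finset.univ := by decide

namespace CosetDiagram

variable {D : CosetDiagram} {Γ Γ' : Subgroup PSL2Z}

/-- `D` is the coset diagram of `Γ`, up to a numbering of the cosets. -/
def IsDiagramOf (D : CosetDiagram) (Γ : Subgroup PSL2Z) : Prop :=
  ∃ e : PSL2Z ⧸ Γ ≃ Fin D.degree,
    (∀ x, e (Sp • x) = D.s (e x)) ∧ ∀ x, e (Rp • x) = D.r (e x)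

/-- The numerical condition on `D` that expresses that the subgroup has genus zero. -/
def IsGenusZero (D : CosetDiagram) : Prop :=
  Fintype.card (Quotient (Perm.SameCycle.setoid D.s)) +
    Fintype.card (Quotient (Perm.SameCycle.setoid D.r)) +
    Fintype.card (Quotient (Perm.SameCycle.setoid (D.s * D.r))) = D.degree + 2

/-- The index of the torsion-free subgroup associated to the subgroup, computed from `D`. -/
def torsionFreeIndex (D : CosetDiagram) : ℕ :=
  D.degree + 3 * Fintype.card {i // D.s i = i} + 2 * Fintype.card {i // D.r i = i}

/-- The condition on `D` that expresses that the subgroup is torsion free. -/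
def FixedPointFree (D : CosetDiagram) : Prop :=
  (∀ i, D.s i ≠ i) ∧ ∀ i, D.r i ≠ i

instance : DecidablePred IsGenusZero := fun _ => inferInstanceAs (Decidable (_ = _))

instance : DecidablePred FixedPointFree := fun _ => inferInstanceAs (Decidable (_ ∧ _))

lemma isDiagramOf_of_bijective {v : Fin D.degree → PSL2Z ⧸ Γ} (hv : Function.Bijective v)
    (hs : ∀ i, Sp • v i = v (D.s i)) (hr : ∀ i, Rp • v i = v (D.r i)) :
    D.IsDiagramOf Γ := by
  refine ⟨(Equiv.ofBijective v hv).symm, fun x => ?_, fun x => ?_⟩ <;>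
    obtain ⟨i, rfl⟩ := hv.2 x
  · rw [hs, Equiv.ofBijective_symm_apply_apply, Equiv.ofBijective_symm_apply_apply]
  · rw [hr, Equiv.ofBijective_symm_apply_apply, Equiv.ofBijective_symm_apply_apply]

theorem exists_isDiagramOf (D : CosetDiagram) : ∃ Γ, D.IsDiagramOf Γ := by
  obtain ⟨φ, hφs, hφr⟩ := exists_monoidHom_map_Sp_eq D.s_sq D.r_cube
  let _ : MulAction PSL2Z (Fin D.degree) := MulAction.compHom _ φ
  have hS (i : Fin D.degree) : Sp • i = D.s i := DFunLike.congr_fun hφs i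
  have hR (i : Fin D.degree) : Rp • i = D.r i := DFunLike.congr_fun hφr i
  have hD : MulAction.IsPretransitive PSL2Z (Fin D.degree) := by
    refine ⟨fun i j => ?_⟩
    classical
    have hA := D.eq_univ_of_invariant {k | k ∈ MulAction.orbit PSL2Z i} ⟨i, by simp⟩
      (by simpa [← hS] using fun k => MulAction.mem_orbit_of_mem_orbit _)
      (by simpa [← hR] using fun k => MulAction.mem_orbit_of_mem_orbit _)
    exact MulAction.mem_orbit_iff.1 (by simpa using hA.ge (Finset.mem_univ j))
  let i₀ : Fin D.degree := ⟨0, Nat.pos_of_ne_zero D.degree_ne_zero⟩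
  obtain ⟨e, he⟩ := exists_equiv_of_stabilizer_eq (G := PSL2Z) (x := i₀) rfl
  exact ⟨_, e, fun x => by rw [he, hS], fun x => by rw [he, hR]⟩

namespace IsDiagramOf

lemma exists_equiv (h : D.IsDiagramOf Γ) : ∃ e : PSL2Z ⧸ Γ ≃ Fin D.degree,
    (∀ x, e (Sp • x) = D.s (e x)) ∧ (∀ x, e (Rp • x) = D.r (e x)) ∧
      ∀ x, e (Tp • x) = (D.s * D.r) (e x) := by
  obtain ⟨e, hs, hr⟩ := h
  refine ⟨e, hs, hr, fun x => ?_⟩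
  rw [← Sp_mul_Sp_mul_Tp, mul_smul, hs, hr, Perm.mul_apply]

lemma index_eq (h : D.IsDiagramOf Γ) : Γ.index = D.degree := by
  obtain ⟨e, -⟩ := h
  rw [Subgroup.index, Nat.card_congr e, Nat.card_fin]

lemma nFix_Tp_eq (h : D.IsDiagramOf Γ) :
    nFix Tp Γ = Fintype.card {i // (D.s * D.r) i = i} := by
  obtain ⟨e, -, -, hT⟩ := h.exists_equiv
  exact nFix_eq_card e hT

lemma genusZero_iff (h : D.IsDiagramOf Γ) : GenusZero Γ ↔ D.IsGenusZero := by
  obtain ⟨e, hs, hr, hT⟩ := h.exists_equiv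
  rw [GenusZero, IsGenusZero, nOrb_eq_card e hs, nOrb_eq_card e hr, nOrb_eq_card e hT,
    h.index_eq]

lemma tfIdx_eq (h : D.IsDiagramOf Γ) : tfIdx Γ = D.torsionFreeIndex := by
  obtain ⟨e, hs, hr⟩ := id h
  rw [tfIdx, torsionFreeIndex, nFix_eq_card e hs, nFix_eq_card e hr, h.index_eq]

lemma torsionFree_iff (h : D.IsDiagramOf Γ) : TorsionFree Γ ↔ D.FixedPointFree := by
  obtain ⟨e, hs, hr⟩ := h
  simp_rw [torsionFree_iff_forall_smul_ne, FixedPointFree, e.surjective.forall, ← hs, ← hr, Ne,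
    e.apply_eq_iff_eq]

lemma subgroupConj (h : D.IsDiagramOf Γ) (h' : D.IsDiagramOf Γ') : SubgroupConj Γ Γ' := by
  obtain ⟨e, hs, hr⟩ := h
  obtain ⟨e', hs', hr'⟩ := h'
  refine subgroupConj_iff_exists_equiv.2 ⟨e'.trans e.symm, map_smul_of_map_Sp_smul ?_ ?_⟩ <;>
    intro x
  · simp [Equiv.symm_apply_eq, hs, hs']
  · simp [Equiv.symm_apply_eq, hr, hr']

lemma of_subgroupConj (h : D.IsDiagramOf Γ) (hΓ : SubgroupConj Γ Γ') : D.IsDiagramOf Γ' := by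
  obtain ⟨e, hs, hr⟩ := h
  obtain ⟨f, hf⟩ := subgroupConj_iff_exists_equiv.1 hΓ
  exact ⟨f.trans e, fun x => by simp [hf, hs], fun x => by simp [hf, hr]⟩

end IsDiagramOf

/-- The diagram of `PSL(2,ℤ)` itself. -/
def full : CosetDiagram where
  degree := 1
  s := 1
  r := 1

/-- The diagram of the unique subgroup of index two. -/
def indexTwo : CosetDiagram where
  degree := 2
  s := c[0, 1]
  r := 1

/-- The diagram of the congruence subgroup `Γ₀(2)`. -/
def gammaZeroTwo : CosetDiagram where
  degree := 3
  s := c[1, 2]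
  r := c[0, 1, 2]

/-- The diagram of the congruence subgroup `Γ₀(3)`. -/
def gammaZeroThree : CosetDiagram where
  degree := 4
  s := c[0, 1] * c[2, 3]
  r := c[1, 2, 3]

/-- The diagram of the congruence subgroup `Γ₀(4)`. -/
def gammaZeroFour : CosetDiagram where
  degree := 6
  s := c[0, 3] * c[1, 2] * c[4, 5]
  r := c[0, 1, 2] * c[3, 4, 5]

/-- The diagram of the principal congruence subgroup `Γ(2)`. -/
def gammaTwo : CosetDiagram where
  degree := 6
  s := c[0, 3] * c[1, 5] * c[2, 4]
  r := c[0, 1, 2] * c[3, 4, 5]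

/-- The diagram of the commutator subgroup of `PSL(2,ℤ)`, which has genus one. -/
def commutator : CosetDiagram where
  degree := 6
  s := c[0, 3] * c[1, 4] * c[2, 5]
  r := c[0, 1, 2] * c[3, 4, 5]

/-- The diagrams of the six conjugacy classes, those of the torsion-free subgroups coming last. -/
def genusZeroDiagram : Fin 6 → CosetDiagram :=
  ![full, indexTwo, gammaZeroTwo, gammaZeroThree, gammaZeroFour, gammaTwo]

lemma isGenusZero_genusZeroDiagram (i : Fin 6) : (genusZeroDiagram i).IsGenusZero := by
  decide +revert

lemma torsionFreeIndex_genusZeroDiagram (i : Fin 6) :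
    (genusZeroDiagram i).torsionFreeIndex = 6 := by
  decide +revert

lemma fixedPointFree_genusZeroDiagram_iff (i : Fin 6) :
    (genusZeroDiagram i).FixedPointFree ↔ 4 ≤ i := by
  decide +revert

lemma not_isGenusZero_commutator : ¬ commutator.IsGenusZero := by
  decide

lemma eq_of_isDiagramOf_genusZeroDiagram {i j : Fin 6} (hi : (genusZeroDiagram i).IsDiagramOf Γ)
    (hj : (genusZeroDiagram j).IsDiagramOf Γ) : i = j := by
  have hinj : ∀ i j : Fin 6, (genusZeroDiagram i).degree = (genusZeroDiagram j).degree →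
      Fintype.card {k // ((genusZeroDiagram i).s * (genusZeroDiagram i).r) k = k} =
        Fintype.card {k // ((genusZeroDiagram j).s * (genusZeroDiagram j).r) k = k} → i = j := by
    decide
  exact hinj i j (hi.index_eq.symm.trans hj.index_eq) (hi.nFix_Tp_eq.symm.trans hj.nFix_Tp_eq)

end CosetDiagram

section Classification

variable {Γ : Subgroup PSL2Z}

lemma Sp_smul_Sp_smul (x : PSL2Z ⧸ Γ) : Sp • Sp • x = x := by
  rw [← mul_smul, ← pow_two, Sp_sq, one_smul]

lemma Rp_smul_Rp_smul_Rp_smul (x : PSL2Z ⧸ Γ) : Rp • Rp • Rp • x = x := by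
  rw [← mul_smul, ← mul_smul, ← pow_three', Sp_mul_Tp_cube, one_smul]

lemma bijective_of_index_eq {n : ℕ} [NeZero n] (hΓ : Γ.index = n) {v : Fin n → PSL2Z ⧸ Γ}
    (hv : Function.Injective v) : Function.Bijective v := by
  have : Finite (PSL2Z ⧸ Γ) := Nat.finite_of_card_ne_zero (hΓ.trans_ne (NeZero.ne n))
  exact hv.bijective_of_nat_card_le ((Nat.card_fin n).symm ▸ hΓ.le)

lemma smul_ne_of_nFix_eq_zero {g : PSL2Z} (hΓ : Γ.index ≠ 0) (hg : nFix g Γ = 0)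
    (x : PSL2Z ⧸ Γ) : g • x ≠ x := by
  have : Finite (PSL2Z ⧸ Γ) := Nat.finite_of_card_ne_zero hΓ
  exact fun hx => (Finite.card_eq_zero_iff.1 hg).false ⟨x, hx⟩

lemma existsUnique_smul_eq_of_nFix_eq_one {g : PSL2Z} (hg : nFix g Γ = 1) :
    ∃! x : PSL2Z ⧸ Γ, g • x = x :=
  (unique_subtype_iff_existsUnique _).1 <|
    (unique_iff_subsingleton_and_nonempty _).2 (Nat.card_eq_one_iff_unique.1 hg)

lemma smul_eq_of_nFix_eq_index {g : PSL2Z} (hΓ : Γ.index ≠ 0) (hg : nFix g Γ = Γ.index)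
    (x : PSL2Z ⧸ Γ) : g • x = x := by
  have : Finite (PSL2Z ⧸ Γ) := Nat.finite_of_card_ne_zero hΓ
  obtain ⟨y, rfl⟩ := (Subtype.val_injective.bijective_of_nat_card_le hg.ge).2 x
  exact y.2

open CosetDiagram

lemma isDiagramOf_full (hΓ : Γ.index = 1) : full.IsDiagramOf Γ := by
  have : Subsingleton (PSL2Z ⧸ Γ) := (Nat.card_eq_one_iff_unique.1 hΓ).1
  have hv := bijective_of_index_eq hΓ (v := fun _ => (1 : PSL2Z))
    (Function.injective_of_subsingleton _)
  exact isDiagramOf_of_bijective hv (fun _ => Subsingleton.elim _ _) fun _ => Subsingleton.elim _ _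

lemma isDiagramOf_indexTwo (hΓ : Γ.index = 2) (hS : ∀ x : PSL2Z ⧸ Γ, Sp • x ≠ x)
    (hR : ∀ x : PSL2Z ⧸ Γ, Rp • x = x) : indexTwo.IsDiagramOf Γ := by
  let p : PSL2Z ⧸ Γ := (1 : PSL2Z)
  have hv : Function.Injective ![p, Sp • p] :=
    List.nodup_ofFn.1 (show [p, Sp • p].Nodup by grind)
  refine isDiagramOf_of_bijective (bijective_of_index_eq hΓ hv) (fun i => ?_) (fun i => ?_) <;>
    fin_cases i
  exacts [rfl, Sp_smul_Sp_smul p, hR p, hR _]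

lemma isDiagramOf_gammaZeroTwo (hΓ : Γ.index = 3) (hS : ∃! x : PSL2Z ⧸ Γ, Sp • x = x)
    (hR : ∀ x : PSL2Z ⧸ Γ, Rp • x ≠ x) : gammaZeroTwo.IsDiagramOf Γ := by
  obtain ⟨p, hp, hpu⟩ := hS
  have hSS := Sp_smul_Sp_smul (Γ := Γ)
  have hRRR := Rp_smul_Rp_smul_Rp_smul (Γ := Γ)
  have hv : Function.Injective ![p, Rp • p, Rp • Rp • p] :=
    List.nodup_ofFn.1 (show [p, Rp • p, Rp • Rp • p].Nodup by grind)
  have hb := bijective_of_index_eq hΓ hv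
  have hcov (x) : x ∈ [p, Rp • p, Rp • Rp • p] := List.mem_ofFn.2 (hb.2 x)
  have hSR : Sp • Rp • p = Rp • Rp • p := by
    have := hcov (Sp • Rp • p)
    grind
  refine isDiagramOf_of_bijective hb (fun i => ?_) (fun i => ?_) <;> fin_cases i
  exacts [hp, hSR, hSR ▸ hSS _, rfl, rfl, hRRR p]

lemma isDiagramOf_gammaZeroThree (hΓ : Γ.index = 4) (hS : ∀ x : PSL2Z ⧸ Γ, Sp • x ≠ x)
    (hR : ∃! x : PSL2Z ⧸ Γ, Rp • x = x) : gammaZeroThree.IsDiagramOf Γ := by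
  obtain ⟨p, hp, hpu⟩ := hR
  have hSS := Sp_smul_Sp_smul (Γ := Γ)
  have hRRR := Rp_smul_Rp_smul_Rp_smul (Γ := Γ)
  have hv : Function.Injective ![p, Sp • p, Rp • Sp • p, Rp • Rp • Sp • p] :=
    List.nodup_ofFn.1 (show [p, Sp • p, Rp • Sp • p, Rp • Rp • Sp • p].Nodup by grind)
  have hb := bijective_of_index_eq hΓ hv
  have hcov (x) : x ∈ [p, Sp • p, Rp • Sp • p, Rp • Rp • Sp • p] := List.mem_ofFn.2 (hb.2 x)
  have hSRS : Sp • Rp • Sp • p = Rp • Rp • Sp • p := by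
    have := hcov (Sp • Rp • Sp • p)
    grind
  refine isDiagramOf_of_bijective hb (fun i => ?_) (fun i => ?_) <;> fin_cases i
  exacts [rfl, hSS p, hSRS, hSRS ▸ hSS _, hp, rfl, rfl, hRRR _]

lemma exists_Sp_smul_notMem (hΓ : 3 < Γ.index) :
    ∃ x : PSL2Z ⧸ Γ, Sp • x ∉ ({x, Rp • x, Rp • Rp • x} : Set (PSL2Z ⧸ Γ)) := by
  by_contra! hcon
  have hRRR := Rp_smul_Rp_smul_Rp_smul (Γ := Γ)
  let p : PSL2Z ⧸ Γ := (1 : PSL2Z)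
  let A : Set (PSL2Z ⧸ Γ) := {p, Rp • p, Rp • Rp • p}
  have hR : ∀ x ∈ A, Rp • x ∈ A := by
    rintro x (rfl | rfl | rfl)
    exacts [.inr (.inl rfl), .inr (.inr rfl), .inl (hRRR p)]
  have hS : ∀ x ∈ A, Sp • x ∈ A := by
    intro x hx
    obtain h | h | h := hcon x
    exacts [h.symm ▸ hx, h.symm ▸ hR x hx, h.symm ▸ hR _ (hR x hx)]
  have hA : A = Set.univ := eq_univ_of_forall_smul_mem ⟨p, .inl rfl⟩ hS hR
  refine hΓ.not_ge ?_
  calc Γ.index = A.ncard := by rw [hA, Set.ncard_univ, Subgroup.index]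
    _ ≤ 3 := (Set.ncard_insert_le _ _).trans <| Nat.succ_le_succ <|
      (Set.ncard_insert_le _ _).trans_eq (by rw [Set.ncard_singleton])

lemma isDiagramOf_of_index_eq_six (hΓ : Γ.index = 6) (hS : ∀ x : PSL2Z ⧸ Γ, Sp • x ≠ x)
    (hR : ∀ x : PSL2Z ⧸ Γ, Rp • x ≠ x) :
    gammaZeroFour.IsDiagramOf Γ ∨ gammaTwo.IsDiagramOf Γ ∨ commutator.IsDiagramOf Γ := by
  have hSS := Sp_smul_Sp_smul (Γ := Γ)
  have hRRR := Rp_smul_Rp_smul_Rp_smul (Γ := Γ)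
  obtain ⟨p, hp⟩ := exists_Sp_smul_notMem (hΓ ▸ (by decide : 3 < 6))
  obtain ⟨q, hq⟩ : ∃ q, q = Sp • p := ⟨_, rfl⟩
  have hv : Function.Injective ![p, Rp • p, Rp • Rp • p, q, Rp • q, Rp • Rp • q] :=
    List.nodup_ofFn.1 (show [p, Rp • p, Rp • Rp • p, q, Rp • q, Rp • Rp • q].Nodup by grind)
  have hb := bijective_of_index_eq hΓ hv
  have hcov (x) : x ∈ [p, Rp • p, Rp • Rp • p, q, Rp • q, Rp • Rp • q] :=
    List.mem_ofFn.2 (hb.2 x)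
  have hSq : Sp • q = p := hq ▸ hSS p
  have hSR : Sp • Rp • p = Rp • Rp • p ∨ Sp • Rp • p = Rp • q ∨ Sp • Rp • p = Rp • Rp • q := by
    have := hcov (Sp • Rp • p)
    grind
  obtain h | h | h := hSR
  · have hSRq : Sp • Rp • q = Rp • Rp • q := by
      have := hcov (Sp • Rp • q)
      grind
    refine .inl (isDiagramOf_of_bijective hb (fun i => ?_) fun i => ?_) <;> fin_cases i
    exacts [hq.symm, h, h ▸ hSS _, hSq, hSRq, hSRq ▸ hSS _, rfl, rfl, hRRR p, rfl, rfl, hRRR q]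
  · have hSRRp : Sp • Rp • Rp • p = Rp • Rp • q := by
      have := hcov (Sp • Rp • Rp • p)
      grind
    refine .inr (.inr (isDiagramOf_of_bijective hb (fun i => ?_) fun i => ?_)) <;> fin_cases i
    exacts [hq.symm, h, hSRRp, hSq, h ▸ hSS _, hSRRp ▸ hSS _, rfl, rfl, hRRR p, rfl, rfl, hRRR q]
  · have hSRRp : Sp • Rp • Rp • p = Rp • q := by
      have := hcov (Sp • Rp • Rp • p)
      grind
    refine .inr (.inl (isDiagramOf_of_bijective hb (fun i => ?_) fun i => ?_)) <;> fin_cases i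
    exacts [hq.symm, h, hSRRp, hSq, hSRRp ▸ hSS _, h ▸ hSS _, rfl, rfl, hRRR p, rfl, rfl, hRRR q]

theorem exists_isDiagramOf_genusZeroDiagram_iff :
    (∃ i, (genusZeroDiagram i).IsDiagramOf Γ) ↔
      Γ.index ≠ 0 ∧ GenusZero Γ ∧ tfIdx Γ = 6 := by
  constructor
  · rintro ⟨i, hi⟩
    exact ⟨hi.index_eq.trans_ne (degree_ne_zero _),
      hi.genusZero_iff.2 (isGenusZero_genusZeroDiagram i),
      hi.tfIdx_eq.trans (torsionFreeIndex_genusZeroDiagram i)⟩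
  · rintro ⟨hΓ, hgenus, htf⟩
    rw [tfIdx] at htf
    have hindex : Γ.index = 1 ∨ Γ.index = 2 ∨ Γ.index = 3 ∨ Γ.index = 4 ∨ Γ.index = 6 := by omega
    have hfree {g : PSL2Z} := smul_ne_of_nFix_eq_zero (g := g) hΓ
    obtain h | h | h | h | h := hindex
    · exact ⟨0, isDiagramOf_full h⟩
    · exact ⟨1, isDiagramOf_indexTwo h (hfree (by omega))
        (smul_eq_of_nFix_eq_index hΓ (by omega))⟩
    · exact ⟨2, isDiagramOf_gammaZeroTwo h (existsUnique_smul_eq_of_nFix_eq_one (by omega))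
        (hfree (by omega))⟩
    · exact ⟨3, isDiagramOf_gammaZeroThree h (hfree (by omega))
        (existsUnique_smul_eq_of_nFix_eq_one (by omega))⟩
    · obtain h | h | h :=
        isDiagramOf_of_index_eq_six h (hfree (by omega)) (hfree (by omega))
      · exact ⟨4, h⟩
      · exact ⟨5, h⟩
      · exact absurd (h.genusZero_iff.1 hgenus) not_isGenusZero_commutator

end Classification

section Counting

open CosetDiagram

theorem countClasses_exists_isDiagramOf {ι : Type*} {D : ι → CosetDiagram}
    (hD : ∀ i j Γ, (D i).IsDiagramOf Γ → (D j).IsDiagramOf Γ → i = j) :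
    countClasses (fun Γ => ∃ i, (D i).IsDiagramOf Γ) = Nat.card ι := by
  choose Γ hΓ using fun i => (D i).exists_isDiagramOf
  let f (i : ι) : Quot fun A B : {Γ // ∃ i, (D i).IsDiagramOf Γ} => SubgroupConj A.1 B.1 :=
    .mk _ ⟨Γ i, i, hΓ i⟩
  have hsurj : Function.Surjective f := by
    rintro ⟨K, i, hK⟩
    exact ⟨i, Quot.sound ((hΓ i).subgroupConj hK)⟩
  have hinj : Function.Injective f := by
    choose label hlabel using fun A : {Γ // ∃ i, (D i).IsDiagramOf Γ} => A.2
    have hconj (A B : {Γ // ∃ i, (D i).IsDiagramOf Γ}) (h : SubgroupConj A.1 B.1) :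
        label A = label B :=
      hD _ _ _ ((hlabel A).of_subgroupConj h) (hlabel B)
    have hleft : Function.LeftInverse (Quot.lift label hconj) f := fun i =>
      hD _ _ _ (hlabel ⟨Γ i, i, hΓ i⟩) (hΓ i)
    exact hleft.injective
  exact (Nat.card_congr (.ofBijective f ⟨hinj, hsurj⟩)).symm

lemma countClasses_genusZero (q : Fin 6 → Prop) [DecidablePred q] {P : Subgroup PSL2Z → Prop}
    (hP : ∀ i Γ, (genusZeroDiagram i).IsDiagramOf Γ → (P Γ ↔ q i)) :
    countClasses (fun Γ => Γ.index ≠ 0 ∧ GenusZero Γ ∧ tfIdx Γ = 6 ∧ P Γ) =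
      Fintype.card {i // q i} := by
  rw [← Nat.card_eq_fintype_card, ← countClasses_exists_isDiagramOf
    (D := fun i : {i // q i} => genusZeroDiagram i)]
  · congr 1
    ext Γ
    constructor
    · rintro ⟨hΓ, hgenus, htf, hPΓ⟩
      obtain ⟨i, hi⟩ := exists_isDiagramOf_genusZeroDiagram_iff.2 ⟨hΓ, hgenus, htf⟩
      exact ⟨⟨i, (hP i Γ hi).1 hPΓ⟩, hi⟩
    · rintro ⟨i, hi⟩
      obtain ⟨hΓ, hgenus, htf⟩ := exists_isDiagramOf_genusZeroDiagram_iff.1 ⟨i.1, hi⟩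
      exact ⟨hΓ, hgenus, htf, (hP i Γ hi).2 i.2⟩
  · exact fun i j Γ hi hj => Subtype.ext (eq_of_isDiagramOf_genusZeroDiagram hi hj)

end Counting

/-- There are exactly 6 conjugacy classes of genus-zero finite-index subgroups `Γ` of
`PSL(2,ℤ)` with `n + 3e₂ + 2e₃ = 6`; exactly 2 of them are torsion free and exactly 4
contain a nontrivial element of finite order. -/
theorem count_K6 :
    countClasses (fun Γ => Γ.index ≠ 0 ∧ GenusZero Γ ∧ tfIdx Γ = 6) = 6 ∧
    countClasses (fun Γ => Γ.index ≠ 0 ∧ GenusZero Γ ∧ tfIdx Γ = 6 ∧ TorsionFree Γ) = 2 ∧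
    countClasses (fun Γ => Γ.index ≠ 0 ∧ GenusZero Γ ∧ tfIdx Γ = 6 ∧ ¬ TorsionFree Γ) = 4 := by
  have htf (i : Fin 6) (Γ : Subgroup PSL2Z)
      (h : (CosetDiagram.genusZeroDiagram i).IsDiagramOf Γ) : TorsionFree Γ ↔ 4 ≤ i :=
    h.torsionFree_iff.trans (CosetDiagram.fixedPointFree_genusZeroDiagram_iff i)
  refine ⟨?_, ?_, ?_⟩
  · simpa using countClasses_genusZero (fun _ => True) (P := fun _ => True) fun _ _ _ => Iff.rfl
  · exact (countClasses_genusZero (4 ≤ ·) htf).trans (by decide)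
  · exact (countClasses_genusZero (¬ 4 ≤ ·) fun i Γ h => (htf i Γ h).not).trans (by decide)
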